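/- Let k be a positive integer and let f : ℝ → ℝ be defined for x ≥ 1 and k-times differentiable for all x ≥ x₀ for some x₀ > 0. Suppose the k-th derivative f^(k) is monotonic on some interval [x₁,∞), that f^(k)(x) → 0 as x → ∞, and that x·|f^(k)(x)| → ∞ as x → ∞. Then the sequence (f(n))_{n∈ℕ} is uniformly distributed modulo 1. -/

import Mathlib

/-!
By Weyl's criterion it suffices that, for every integer `h ≠ 0`, the means of `e(h f(n))` tend to
`0`, where `e(x) = exp(2πix)`. Up to the sign of `f` (complex conjugation of the means) the `k`-th
derivative decreases to `0`, and these hypotheses survive multiplication by a positive constant, so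
it is enough to treat `e(f(n))` for `f` in the class `FejerClass k`, by induction on `k`.

* Induction step. For an integer `d ≥ 1`, the function `x ↦ f (x + d) - f x` lies in the class with
  `k` lowered by one: its `(k-1)`-st derivative is antitone because its derivative
  `f⁽ᵏ⁾(x + d) - f⁽ᵏ⁾(x)` is nonpositive, and by the mean value theorem it lies between
  `d f⁽ᵏ⁾(x + d)` and `d f⁽ᵏ⁾(x)` (`FejerClass.diff`). Van der Corput's difference theorem
  (`meanZero_of_vanDerCorput`) then passes from the differences to `f` itself.
* Base case. The same lemma with `k = 1`, `d = 1` shows that the differences `aₙ = f(n+1) - f(n)`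
  decrease to `0` with `n aₙ → ∞`. Fejér's argument (`meanZero_of_antitone_diff`) compares `e(f(n))`
  with `(e(f(n+1)) - e(f(n))) / (2πi aₙ)`, up to an error of order `aₙ`; summation by parts bounds
  the sum of the main terms by a multiple of `1 / a_N = o(N)`, and the errors have mean tending to
  `0` by Cesàro.

Weyl's criterion (`unifDistMod1_of_meanZero`) comes from the density of trigonometric polynomials in
`C(ℝ/ℤ)`, which gives weak convergence of the empirical measures to Lebesgue measure, and from the
portmanteau theorem for the arc `[a, b)`, whose frontier is null.
-/

open Filter Topology

/-- `|x|` begins with the base-`k` digit string of `d`: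
there is an integer `m ≥ 0` with `d·k^m ≤ |x| < (d+1)·k^m`. -/
def BeginsWith (k d : ℕ) (x : ℝ) : Prop :=
  ∃ m : ℕ, (d : ℝ) * (k : ℝ) ^ m ≤ |x| ∧ |x| < ((d : ℝ) + 1) * (k : ℝ) ^ m

open scoped Classical in
/-- The set `S ⊆ ℕ` has natural density `r`. -/
def HasNatDensity (S : Set ℕ) (r : ℝ) : Prop :=
  Tendsto (fun N : ℕ => (((Finset.range N).filter (fun n => n ∈ S)).card : ℝ) / N)
    atTop (𝓝 r)

/-- The sequence `a` is Benford. -/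
def IsBenford (a : ℕ → ℝ) : Prop :=
  ∀ k : ℕ, 2 ≤ k → ∀ d : ℕ, 0 < d →
    HasNatDensity {n | BeginsWith k d (a n)} (Real.logb k (d + 1) - Real.logb k d)

open scoped Classical in
/-- The real sequence `x` is uniformly distributed modulo 1. -/
def UnifDistMod1 (x : ℕ → ℝ) : Prop :=
  ∀ a b : ℝ, 0 ≤ a → a < b → b ≤ 1 →
    Tendsto (fun N : ℕ =>
        (((Finset.Icc 1 N).filter (fun n => Int.fract (x n) ∈ Set.Ico a b)).card : ℝ) / N)
      atTop (𝓝 (b - a))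

open scoped ComplexConjugate

/-! ### Means of bounded sequences and Fejér's theorem -/

/-- The averages `(u 0 + ⋯ + u (N - 1)) / N` tend to `0`. -/
def MeanZero (u : ℕ → ℂ) : Prop :=
  Tendsto (fun N : ℕ => (∑ n ∈ Finset.range N, u n) / (N : ℂ)) atTop (𝓝 0)

/-- The standard character `e(x) = exp(2πix)` of `ℝ/ℤ`, as a complex-valued function on `ℝ`. -/
noncomputable def expCircle (x : ℝ) : ℂ := Complex.exp (2 * Real.pi * x * Complex.I)

lemma norm_expCircle (x : ℝ) : ‖expCircle x‖ = 1 := by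
  have : (2 * Real.pi * x * Complex.I : ℂ) = ((2 * Real.pi * x : ℝ) : ℂ) * Complex.I := by
    push_cast; ring
  rw [expCircle, this, Complex.norm_exp_ofReal_mul_I]

lemma expCircle_add (x y : ℝ) : expCircle (x + y) = expCircle x * expCircle y := by
  rw [expCircle, expCircle, expCircle, ← Complex.exp_add]; congr 1; push_cast; ring

lemma conj_expCircle (x : ℝ) : conj (expCircle x) = expCircle (-x) := by
  rw [expCircle, expCircle, ← Complex.exp_conj]
  congr 1
  simp [Complex.conj_ofReal, Complex.conj_ofNat]

lemma meanZero_conj {u : ℕ → ℂ} (h : MeanZero u) : MeanZero (fun n => conj (u n)) := by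
  have h2 := (Complex.continuous_conj.tendsto 0).comp h
  simp only [map_zero] at h2
  refine h2.congr fun N => ?_
  simp [map_sum]

lemma meanZero_succ_iff {u : ℕ → ℂ} (hu : ∀ n, ‖u n‖ ≤ 1) :
    MeanZero (fun n => u (n + 1)) ↔ MeanZero u := by
  have hz : Tendsto (fun N : ℕ => (u N - u 0) / (N : ℂ)) atTop (𝓝 0) := by
    refine squeeze_zero_norm (fun N => ?_) (tendsto_const_div_atTop_nhds_zero_nat 2)
    rw [norm_div, Complex.norm_natCast]
    gcongr
    exact (norm_sub_le _ _).trans (by linarith [hu N, hu 0])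
  have key : ∀ N : ℕ, (∑ n ∈ Finset.range N, u (n + 1)) / (N : ℂ)
      = (∑ n ∈ Finset.range N, u n) / (N : ℂ) + (u N - u 0) / (N : ℂ) := by
    intro N
    rw [← add_div, ← Finset.sum_range_sub u N, ← Finset.sum_add_distrib]
    simp
  unfold MeanZero
  simp_rw [key]
  constructor
  · intro h
    simpa using h.sub hz
  · intro h
    simpa using h.add hz

lemma meanZero_add_iff {u : ℕ → ℂ} (hu : ∀ n, ‖u n‖ ≤ 1) (m : ℕ) :
    MeanZero (fun n => u (n + m)) ↔ MeanZero u := by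
  induction m with
  | zero => rfl
  | succ m ih =>
    rw [← ih, ← meanZero_succ_iff (u := fun n => u (n + m)) fun n => hu _]
    simp only [add_assoc, add_comm 1 m]

/-- Second-order Taylor bound: `e(x)` is the difference quotient `(e(x + a) - e(x)) / (2πi a)` up
to `O(a)`. -/
lemma norm_sub_expCircle_div_le {a : ℝ} (ha : 0 < a) (ha' : 2 * Real.pi * a ≤ 1) (x : ℝ) :
    ‖expCircle x - (expCircle (x + a) - expCircle x) * ((1 / a : ℝ) : ℂ)
      / (2 * Real.pi * Complex.I)‖ ≤ 2 * Real.pi * a := by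
  have hpi := Real.pi_pos
  set z : ℂ := 2 * Real.pi * a * Complex.I with hz
  have hzn : ‖z‖ = 2 * Real.pi * a := by
    simp [hz, abs_of_pos hpi, abs_of_pos ha]
  have hz0 : z ≠ 0 := by
    rw [← norm_pos_iff, hzn]; positivity
  have h1 : ‖Complex.exp z - 1 - z‖ ≤ ‖z‖ ^ 2 :=
    Complex.norm_exp_sub_one_sub_id_le (hzn ▸ ha')
  have ha0 : (a : ℂ) ≠ 0 := by exact_mod_cast ha.ne'
  have hpi0 : (Real.pi : ℂ) ≠ 0 := by exact_mod_cast hpi.ne'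
  have h2 : expCircle x - (expCircle (x + a) - expCircle x) * ((1 / a : ℝ) : ℂ)
      / (2 * Real.pi * Complex.I) = -(expCircle x * ((Complex.exp z - 1 - z) / z)) := by
    have : expCircle a = Complex.exp z := rfl
    rw [expCircle_add, this]
    have h3 : ((1 / a : ℝ) : ℂ) / (2 * Real.pi * Complex.I) = 1 / z := by
      rw [hz]; push_cast; field_simp
    rw [mul_div_assoc, h3]
    field_simp
    ring
  rw [h2, norm_neg, norm_mul, norm_expCircle, one_mul, norm_div,
    div_le_iff₀ (norm_pos_iff.2 hz0), ← hzn]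
  nlinarith

/-- Fejér's theorem when the monotonicity, positivity and smallness of the differences `a n` hold
from the first term on. -/
lemma meanZero_of_antitone_diff_aux {y : ℕ → ℝ} (a : ℕ → ℝ) (ha : ∀ n, y (n + 1) = y n + a n)
    (hanti : Antitone a) (hpos : ∀ n, 0 < a n) (hsmall : ∀ n, 2 * Real.pi * a n ≤ 1)
    (hlim : Tendsto a atTop (𝓝 0)) (hinf : Tendsto (fun n : ℕ => (n : ℝ) * a n) atTop atTop) :
    MeanZero (fun n => expCircle (y n)) := by
  set E : ℕ → ℂ := fun n => expCircle (y n) with hE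
  set b : ℕ → ℝ := fun n => 1 / a n with hb
  have hbpos : ∀ n, 0 < b n := fun n => one_div_pos.2 (hpos n)
  have hbmono : ∀ n, b n ≤ b (n + 1) := fun n =>
    one_div_le_one_div_of_le (hpos _) (hanti n.le_succ)
  have abel : ∀ N, ∑ n ∈ Finset.range N, (E (n + 1) - E n) * (b n : ℂ)
      = E N * b N - E 0 * b 0 - ∑ n ∈ Finset.range N, E (n + 1) * ((b (n + 1) - b n : ℝ) : ℂ) := by
    intro N
    induction N with
    | zero => simp
    | succ N ih => rw [Finset.sum_range_succ, ih, Finset.sum_range_succ]; push_cast; ring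
  have hEn : ∀ n, ‖E n‖ = 1 := fun n => norm_expCircle _
  have hmain : ∀ N, ‖∑ n ∈ Finset.range N, (E (n + 1) - E n) * (b n : ℂ)‖ ≤ 2 * b N := by
    intro N
    have h1 : ‖∑ n ∈ Finset.range N, E (n + 1) * ((b (n + 1) - b n : ℝ) : ℂ)‖ ≤ b N - b 0 := by
      rw [← Finset.sum_range_sub b N]
      refine norm_sum_le_of_le _ fun n _ => ?_
      rw [norm_mul, hEn, one_mul, Complex.norm_real, Real.norm_eq_abs,
        abs_of_nonneg (sub_nonneg.2 (hbmono n))]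
    have h2 : ∀ n, ‖E n * (b n : ℂ)‖ = b n := fun n => by
      rw [norm_mul, hEn, one_mul, Complex.norm_real, Real.norm_eq_abs, abs_of_pos (hbpos n)]
    rw [abel]
    refine (norm_sub_le _ _).trans ?_
    have := norm_sub_le (E N * (b N : ℂ)) (E 0 * (b 0 : ℂ))
    rw [h2, h2] at this
    linarith
  have hc : Tendsto (fun N : ℕ => (2 / (2 * Real.pi)) * ((N : ℝ) * a N)⁻¹ +
      2 * Real.pi * ((N : ℝ)⁻¹ * ∑ n ∈ Finset.range N, a n)) atTop (𝓝 0) := by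
    have h1 := (tendsto_inv_atTop_zero.comp hinf).const_mul (2 / (2 * Real.pi))
    have h2 := hlim.cesaro.const_mul (2 * Real.pi)
    simpa using h1.add h2
  refine squeeze_zero_norm (fun N => ?_) hc
  have hpi := Real.pi_pos
  have hsplit : ∑ n ∈ Finset.range N, E n =
      (∑ n ∈ Finset.range N, (E (n + 1) - E n) * (b n : ℂ)) / (2 * Real.pi * Complex.I)
      + ∑ n ∈ Finset.range N,
        (E n - (E (n + 1) - E n) * (b n : ℂ) / (2 * Real.pi * Complex.I)) := by
    rw [Finset.sum_sub_distrib, ← Finset.sum_div]; ring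
  have hr : ‖∑ n ∈ Finset.range N,
      (E n - (E (n + 1) - E n) * (b n : ℂ) / (2 * Real.pi * Complex.I))‖
      ≤ 2 * Real.pi * ∑ n ∈ Finset.range N, a n := by
    rw [Finset.mul_sum]
    refine norm_sum_le_of_le _ fun n _ => ?_
    have := norm_sub_expCircle_div_le (hpos n) (hsmall n) (y n)
    rw [← ha n] at this
    exact this
  have hnorm : ‖(2 * Real.pi * Complex.I : ℂ)‖ = 2 * Real.pi := by simp [abs_of_pos hpi]
  rw [norm_div, Complex.norm_natCast]
  calc _ ≤ (2 * b N / (2 * Real.pi) + 2 * Real.pi * ∑ n ∈ Finset.range N, a n) / N := by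
        gcongr
        rw [hsplit]
        refine (norm_add_le _ _).trans (add_le_add ?_ hr)
        rw [norm_div, hnorm]
        gcongr
        exact hmain N
    _ = _ := by
        simp only [hb]
        rw [add_div, mul_inv]
        ring

/-- Fejér's theorem: if the differences `a n` of `y` are eventually decreasing, tend to `0`, and
`n * a n → ∞`, then the means of `e(y n)` tend to `0`. -/
lemma meanZero_of_antitone_diff {y a : ℕ → ℝ} (ha : ∀ n, y (n + 1) = y n + a n)
    {n₀ : ℕ} (hanti : AntitoneOn a (Set.Ici n₀))
    (hlim : Tendsto a atTop (𝓝 0)) (hinf : Tendsto (fun n : ℕ => (n : ℝ) * a n) atTop atTop) :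
    MeanZero (fun n => expCircle (y n)) := by
  have hpi := Real.pi_pos
  have h1 : ∀ᶠ n in atTop, 0 < a n := by
    filter_upwards [hinf.eventually_gt_atTop 0] with n hn
    exact pos_of_mul_pos_right hn n.cast_nonneg
  have h2 : ∀ᶠ n in atTop, a n < 1 / (2 * Real.pi) :=
    hlim.eventually_lt_const (by positivity)
  obtain ⟨m, hm⟩ := eventually_atTop.1 ((h1.and h2).and (eventually_ge_atTop n₀))
  rw [← meanZero_add_iff (fun n => (norm_expCircle _).le) m]
  refine meanZero_of_antitone_diff_aux (y := fun n => y (n + m)) (fun n => a (n + m)) (fun n => ?_)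
    (fun i j hij => ?_) (fun n => (hm _ (by omega)).1.1) (fun n => ?_)
    (hlim.comp (tendsto_add_atTop_nat m)) ?_
  · rw [← ha]; congr 1; ring
  · exact hanti (hm _ (by omega)).2 (hm _ (by omega)).2 (by omega)
  · have := (hm (n + m) (by omega)).1.2
    rw [lt_div_iff₀ (by positivity)] at this
    linarith
  · -- `n + m ≤ 2 n` for large `n`
    have h3 := (hinf.comp (tendsto_add_atTop_nat m)).atTop_div_const (zero_lt_two' ℝ)
    refine tendsto_atTop_mono' _ ?_ h3
    filter_upwards [eventually_ge_atTop m] with n hn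
    have h4 : (m : ℝ) ≤ n := by exact_mod_cast hn
    have h5 := (hm (n + m) (by omega)).1.1
    simp only [Function.comp]
    push_cast
    nlinarith

/-! ### Van der Corput's difference theorem -/

lemma meanZero_sub_shift {u : ℕ → ℂ} (hu : ∀ n, ‖u n‖ ≤ 1) (j : ℕ) :
    MeanZero (fun n => u n - u (n + j)) := by
  induction j with
  | zero => simp [MeanZero]
  | succ j ih =>
    have h1 : MeanZero (fun n => u (n + j) - u (n + j + 1)) := by
      refine squeeze_zero_norm (fun N => ?_) (tendsto_const_div_atTop_nhds_zero_nat 2)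
      have := Finset.sum_range_sub' (fun n => u (n + j)) N
      rw [norm_div, Complex.norm_natCast]
      gcongr
      have h2 : ∑ n ∈ Finset.range N, (u (n + j) - u (n + j + 1)) = u (0 + j) - u (N + j) := by
        rw [← this]; refine Finset.sum_congr rfl fun n _ => ?_
        rw [add_right_comm]
      rw [h2]
      exact (norm_sub_le _ _).trans (by linarith [hu (0 + j), hu (N + j)])
    have := ih.add h1
    simp only [add_zero] at this
    refine this.congr fun N => ?_
    rw [← add_div, ← Finset.sum_add_distrib]
    simp [add_assoc]

lemma meanZero_mul_conj {u : ℕ → ℂ} (hu : ∀ n, ‖u n‖ ≤ 1)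
    (h : ∀ d : ℕ, 1 ≤ d → MeanZero (fun n => u (n + d) * conj (u n))) {j l : ℕ} (hjl : j ≠ l) :
    MeanZero (fun n => u (n + j) * conj (u (n + l))) := by
  have hlt : ∀ i m : ℕ, m < i → MeanZero (fun n => u (n + i) * conj (u (n + m))) := by
    intro i m hmi
    obtain ⟨d, rfl⟩ := Nat.exists_eq_add_of_lt hmi
    have h1 := (meanZero_add_iff (u := fun n => u (n + (d + 1)) * conj (u n)) (fun n => ?_) m).2
      (h (d + 1) (by omega))
    · refine h1.congr fun N => ?_
      congr 1
      refine Finset.sum_congr rfl fun n _ => ?_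
      have : n + m + (d + 1) = n + (m + d + 1) := by ring
      simp only [this]
    · rw [norm_mul, RCLike.norm_conj]
      exact mul_le_one₀ (hu _) (norm_nonneg _) (hu _)
  rcases lt_or_gt_of_ne hjl with hlt' | hgt
  · have h1 := meanZero_conj (hlt l j hlt')
    refine h1.congr fun N => ?_
    congr 1
    refine Finset.sum_congr rfl fun n _ => ?_
    simp [mul_comm]
  · exact hlt j l hgt

/-- By Cauchy–Schwarz, the squared mean of the window sums `∑ j < H, u (n + j)` is at most the mean
of their squared norms. Expanding the square, the `H` diagonal correlations contribute at most `H`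
and the others tend to `0`. -/
lemma eventually_norm_mean_window_le {u : ℕ → ℂ} (hu : ∀ n, ‖u n‖ ≤ 1)
    (h : ∀ d : ℕ, 1 ≤ d → MeanZero (fun n => u (n + d) * conj (u n))) (H : ℕ) :
    ∀ᶠ N : ℕ in atTop,
      ‖(∑ n ∈ Finset.range N, ∑ j ∈ Finset.range H, u (n + j)) / (N : ℂ)‖ ^ 2 ≤ H + 1 := by
  set c : ℕ → ℕ → ℕ → ℂ := fun j l N =>
    (∑ n ∈ Finset.range N, u (n + j) * conj (u (n + l))) / (N : ℂ) with hc
  have hlim : Tendsto (fun N => ∑ j ∈ Finset.range H, ∑ l ∈ (Finset.range H).erase j, ‖c j l N‖)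
      atTop (𝓝 0) := by
    have := tendsto_finsetSum (Finset.range H) (fun j _ =>
      tendsto_finsetSum ((Finset.range H).erase j) (fun l hl =>
        (meanZero_mul_conj hu h (Finset.ne_of_mem_erase hl).symm).norm))
    simpa only [norm_zero, Finset.sum_const_zero] using this
  have hdiag : ∀ j N, ‖c j j N‖ ≤ 1 := by
    intro j N
    rw [hc]
    simp only
    rw [norm_div, Complex.norm_natCast]
    refine div_le_one_of_le₀ ?_ N.cast_nonneg
    refine (norm_sum_le_of_le (f := fun n => u (n + j) * conj (u (n + j))) (Finset.range N)
      (n := fun _ => (1 : ℝ)) fun n _ => ?_).trans (by simp)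
    rw [norm_mul, RCLike.norm_conj]
    exact mul_le_one₀ (hu _) (norm_nonneg _) (hu _)
  filter_upwards [hlim.eventually_lt_const one_pos, eventually_gt_atTop 0] with N hN hN0
  have hN0' : (0 : ℝ) < N := by exact_mod_cast hN0
  set w : ℕ → ℂ := fun n => ∑ j ∈ Finset.range H, u (n + j) with hw
  have hsq : (((∑ n ∈ Finset.range N, ‖w n‖ ^ 2) / N : ℝ) : ℂ)
      = ∑ j ∈ Finset.range H, ∑ l ∈ Finset.range H, c j l N := by
    simp only [hc, ← Finset.sum_div]
    push_cast
    congr 1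
    rw [Finset.sum_congr rfl fun j _ => Finset.sum_comm, Finset.sum_comm]
    refine Finset.sum_congr rfl fun n _ => ?_
    rw [← Complex.mul_conj', hw]
    simp only [map_sum]
    rw [Finset.sum_mul_sum]
  have hcs : ‖∑ n ∈ Finset.range N, w n‖ ^ 2 ≤ N * ∑ n ∈ Finset.range N, ‖w n‖ ^ 2 := by
    calc _ ≤ (∑ n ∈ Finset.range N, ‖w n‖) ^ 2 := by gcongr; exact norm_sum_le _ _
      _ ≤ _ := by simpa using sq_sum_le_card_mul_sum_sq (s := Finset.range N) (f := fun n => ‖w n‖)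
  have hle : (∑ n ∈ Finset.range N, ‖w n‖ ^ 2) / N ≤ (H : ℝ) + 1 := by
    have h0 : 0 ≤ (∑ n ∈ Finset.range N, ‖w n‖ ^ 2) / (N : ℝ) := by positivity
    rw [← abs_of_nonneg h0, ← Real.norm_eq_abs, ← Complex.norm_real, hsq]
    have h1 : ‖∑ j ∈ Finset.range H, ∑ l ∈ Finset.range H, c j l N‖ ≤
        ∑ j ∈ Finset.range H, (1 + ∑ l ∈ (Finset.range H).erase j, ‖c j l N‖) := by
      refine norm_sum_le_of_le _ fun j hj => ?_
      rw [← Finset.add_sum_erase _ _ hj]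
      exact (norm_add_le _ _).trans (add_le_add (hdiag j N) (norm_sum_le _ _))
    rw [Finset.sum_add_distrib] at h1
    simp only [Finset.sum_const, Finset.card_range, nsmul_eq_mul, mul_one] at h1
    linarith
  rw [norm_div, Complex.norm_natCast, div_pow, div_le_iff₀ (by positivity)]
  rw [div_le_iff₀ hN0'] at hle
  nlinarith

/-- Van der Corput's difference theorem: if all correlations `u (n + d) * conj (u n)` with `d ≥ 1`
have mean `0`, then so does `u`. -/
lemma meanZero_of_vanDerCorput {u : ℕ → ℂ} (hu : ∀ n, ‖u n‖ ≤ 1)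
    (h : ∀ d : ℕ, 1 ≤ d → MeanZero (fun n => u (n + d) * conj (u n))) : MeanZero u := by
  rw [MeanZero, Metric.tendsto_nhds]
  intro ε hε
  -- For windows of length `m ^ 2`, the mean of `u` is eventually at most
  -- `(√(m ^ 2 + 1) + 1) / m ^ 2 ≤ (m + 2) / m ^ 2 ≤ 3 / m`.
  obtain ⟨m, hm⟩ := exists_nat_gt (3 / ε)
  have hm0 : (0 : ℝ) < m := lt_trans (by positivity) hm
  have hm1 : (1 : ℝ) ≤ m := by exact_mod_cast (by exact_mod_cast hm0 : 0 < m)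
  have hsub : Tendsto (fun N : ℕ => ∑ j ∈ Finset.range (m ^ 2),
      (∑ n ∈ Finset.range N, (u n - u (n + j))) / (N : ℂ)) atTop (𝓝 0) := by
    simpa using tendsto_finsetSum (Finset.range (m ^ 2)) fun j _ => meanZero_sub_shift hu j
  filter_upwards [eventually_norm_mean_window_le hu h (m ^ 2),
    hsub.norm.eventually_lt_const (by simp : ‖(0 : ℂ)‖ < 1)] with N h1 h2
  rw [dist_zero_right]
  set A := (∑ n ∈ Finset.range N, u n) / (N : ℂ)
  set B := (∑ n ∈ Finset.range N, ∑ j ∈ Finset.range (m ^ 2), u (n + j)) / (N : ℂ)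
  have h3 : ∑ j ∈ Finset.range (m ^ 2),
      (∑ n ∈ Finset.range N, (u n - u (n + j))) / (N : ℂ) = (m : ℂ) ^ 2 * A - B := by
    rw [← Finset.sum_div]
    simp_rw [Finset.sum_sub_distrib]
    rw [Finset.sum_const, Finset.card_range, nsmul_eq_mul, Finset.sum_comm, sub_div, mul_div_assoc]
    push_cast
    rfl
  rw [h3] at h2
  have h4 : ‖B‖ ≤ m + 1 := by
    push_cast at h1
    refine abs_le_of_sq_le_sq' (by nlinarith) (by positivity) |>.2
  have h5 : (m : ℝ) ^ 2 * ‖A‖ = ‖(m : ℂ) ^ 2 * A‖ := by simp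
  have h6 : ‖(m : ℂ) ^ 2 * A‖ ≤ ‖(m : ℂ) ^ 2 * A - B‖ + ‖B‖ := by
    calc _ = ‖((m : ℂ) ^ 2 * A - B) + B‖ := by rw [sub_add_cancel]
      _ ≤ _ := norm_add_le _ _
  rw [div_lt_iff₀ hε] at hm
  have h7 : (m : ℝ) ^ 2 * ‖A‖ < m ^ 2 * ε := by nlinarith
  exact lt_of_mul_lt_mul_left h7 (by positivity)

/-! ### Iterated differencing -/

/-- Functions whose `k`-th derivative `F k` is eventually antitone, tends to `0`, and satisfies
`x * F k x → ∞`. The successive derivatives are recorded as a chain `F 0 = f, F 1, …, F k` on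
`[x₀, ∞)`, so that differences are formed on the whole chain at once. No absolute value is needed:
an antitone function tending to `0` is nonnegative. -/
def FejerClass (k : ℕ) (f : ℝ → ℝ) : Prop :=
  ∃ (x₀ : ℝ) (F : ℕ → ℝ → ℝ), F 0 = f ∧
    (∀ i < k, ∀ x ≥ x₀, HasDerivAt (F i) (F (i + 1) x) x) ∧
    AntitoneOn (F k) (Set.Ici x₀) ∧ Tendsto (F k) atTop (𝓝 0) ∧
    Tendsto (fun x => x * F k x) atTop atTop

lemma AntitoneOn.nonneg_of_tendsto_zero {g : ℝ → ℝ} {x₀ : ℝ} (hg : AntitoneOn g (Set.Ici x₀))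
    (hlim : Tendsto g atTop (𝓝 0)) {x : ℝ} (hx : x₀ ≤ x) : 0 ≤ g x := by
  refine le_of_tendsto hlim ?_
  filter_upwards [eventually_ge_atTop x] with y hy
  exact hg hx (hx.trans hy) hy

/-- Differencing with an integer step `d ≥ 1` lowers the order by one. -/
lemma FejerClass.diff {k : ℕ} {f : ℝ → ℝ} (hf : FejerClass (k + 1) f) {d : ℕ} (hd : 1 ≤ d) :
    FejerClass k (fun x => f (x + d) - f x) := by
  obtain ⟨x₀, F, rfl, hder, hanti, hlim, hinf⟩ := hf
  have hd1 : (1 : ℝ) ≤ d := by exact_mod_cast hd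
  have hG : ∀ i < k + 1, ∀ x ≥ x₀,
      HasDerivAt (fun x => F i (x + d) - F i x) (F (i + 1) (x + d) - F (i + 1) x) x :=
    fun i hi x hx => ((hder i hi (x + d) (by linarith)).comp_add_const x d).sub (hder i hi x hx)
  have hmvt : ∀ x ≥ x₀, d * F (k + 1) (x + d) ≤ F k (x + d) - F k x ∧
      F k (x + d) - F k x ≤ d * F (k + 1) x := by
    intro x hx
    obtain ⟨ξ, hξ, h⟩ := exists_hasDerivAt_eq_slope (F k) (F (k + 1)) (by linarith : x < x + d)
      (fun y hy => (hder k (by omega) y (hx.trans hy.1)).continuousAt.continuousWithinAt)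
      (fun y hy => hder k (by omega) y (hx.trans hy.1.le))
    rw [add_sub_cancel_left, eq_div_iff (by linarith)] at h
    have hξ₀ : x₀ ≤ ξ := hx.trans hξ.1.le
    rw [← h, mul_comm (F (k + 1) ξ)]
    constructor <;> refine mul_le_mul_of_nonneg_left ?_ (by linarith)
    · exact hanti hξ₀ (hξ₀.trans hξ.2.le) hξ.2.le
    · exact hanti hx hξ₀ hξ.1.le
  have hshift : Tendsto (fun x : ℝ => x + d) atTop atTop :=
    tendsto_atTop_add_const_right _ _ tendsto_id
  refine ⟨x₀, fun i x => F i (x + d) - F i x, rfl, fun i hi => hG i (by omega), ?_, ?_, ?_⟩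
  · refine antitoneOn_of_deriv_nonpos (convex_Ici x₀)
      (fun x hx => (hG k (by omega) x hx).continuousAt.continuousWithinAt)
      (fun x hx => (hG k (by omega) x (interior_subset hx)).differentiableAt.differentiableWithinAt)
      (fun x hx => ?_)
    have hx' : x₀ ≤ x := interior_subset hx
    rw [(hG k (by omega) x hx').deriv, sub_nonpos]
    exact hanti hx' (Set.mem_Ici.2 (by linarith)) (by linarith)
  · have h1 := (hlim.comp hshift).const_mul (d : ℝ)
    have h2 := hlim.const_mul (d : ℝ)
    rw [mul_zero] at h1 h2
    refine tendsto_of_tendsto_of_tendsto_of_le_of_le' h1 h2 ?_ ?_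
    · filter_upwards [eventually_ge_atTop x₀] with x hx using (hmvt x hx).1
    · filter_upwards [eventually_ge_atTop x₀] with x hx using (hmvt x hx).2
  · refine tendsto_atTop_mono' _ ?_ ((hinf.comp hshift).atTop_div_const (zero_lt_two' ℝ))
    filter_upwards [eventually_ge_atTop x₀, eventually_ge_atTop 1] with x hx hx1
    have h0 : 0 ≤ F (k + 1) (x + d) := hanti.nonneg_of_tendsto_zero hlim (by linarith)
    have h1 := (hmvt x hx).1
    -- `x + d ≤ 2 x d` since `x, d ≥ 1`
    have h2 : x + d ≤ 2 * (x * d) := by nlinarith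
    have h3 := mul_le_mul_of_nonneg_right h2 h0
    have h4 := mul_le_mul_of_nonneg_left h1 (by linarith : 0 ≤ x)
    simp only [Function.comp]
    linarith

lemma FejerClass.const_mul {k : ℕ} {f : ℝ → ℝ} (hf : FejerClass k f) {c : ℝ} (hc : 0 < c) :
    FejerClass k (fun x => c * f x) := by
  obtain ⟨x₀, F, rfl, hder, hanti, hlim, hinf⟩ := hf
  refine ⟨x₀, fun i x => c * F i x, rfl, fun i hi x hx => (hder i hi x hx).const_mul c,
    fun x hx y hy hxy => mul_le_mul_of_nonneg_left (hanti hx hy hxy) hc.le, ?_, ?_⟩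
  · simpa using hlim.const_mul c
  · exact (hinf.const_mul_atTop hc).congr fun x => by ring

/-- The exponential-sum form of the theorem, by induction on the order of the derivative. -/
lemma FejerClass.meanZero {k : ℕ} {f : ℝ → ℝ} (hf : FejerClass (k + 1) f) :
    MeanZero (fun n : ℕ => expCircle (f n)) := by
  induction k generalizing f with
  | zero =>
    obtain ⟨x₀, F, hF, -, hanti, hlim, hinf⟩ := hf.diff le_rfl
    have hnat := tendsto_natCast_atTop_atTop (R := ℝ)
    refine meanZero_of_antitone_diff (a := fun n : ℕ => F 0 n) (n₀ := ⌈x₀⌉₊) (fun n => ?_) ?_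
      (hlim.comp hnat) (hinf.comp hnat)
    · simp [hF]
    · intro m hm n hn hmn
      exact hanti (Nat.ceil_le.1 hm) (Nat.ceil_le.1 hn) (Nat.cast_le.2 hmn)
  | succ k ih =>
    refine meanZero_of_vanDerCorput (fun n => (norm_expCircle _).le) fun d hd => ?_
    refine (ih (hf.diff hd)).congr fun N => ?_
    simp [conj_expCircle, ← expCircle_add, sub_eq_add_neg]

/-! ### Weyl's criterion -/

open MeasureTheory in
/-- If the means of all nontrivial characters tend to `0`, then the means of every continuous
function on the circle tend to its integral: this holds for trigonometric polynomials, which are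
dense, and both sides are continuous in `φ` uniformly in `N`. -/
lemma tendsto_mean_continuousMap {x : ℕ → ℝ}
    (hx : ∀ h : ℤ, h ≠ 0 → MeanZero (fun n => expCircle (h * x n))) (φ : C(UnitAddCircle, ℂ)) :
    Tendsto (fun N : ℕ => (∑ n ∈ Finset.range N, φ (x n : UnitAddCircle)) / (N : ℂ)) atTop
      (𝓝 (∫ t, φ t)) := by
  have : IsProbabilityMeasure (volume : Measure UnitAddCircle) := ⟨UnitAddCircle.measure_univ⟩
  have hInt : ∀ ψ : C(UnitAddCircle, ℂ), Integrable ψ (volume : Measure UnitAddCircle) :=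
    fun ψ => ψ.continuous.integrable_of_hasCompactSupport (HasCompactSupport.of_compactSpace _)
  have hmean : ∀ (ψ : C(UnitAddCircle, ℂ)) (N : ℕ),
      ‖(∑ n ∈ Finset.range N, ψ (x n : UnitAddCircle)) / (N : ℂ)‖ ≤ ‖ψ‖ := by
    intro ψ N
    rw [norm_div, Complex.norm_natCast]
    refine div_le_of_le_mul₀ N.cast_nonneg (norm_nonneg _) ?_
    refine (norm_sum_le_of_le _ fun n _ => ψ.norm_coe_le_norm _).trans ?_
    simp [mul_comm]
  have hIntLe : ∀ ψ : C(UnitAddCircle, ℂ), ‖∫ t, ψ t‖ ≤ ‖ψ‖ := fun ψ => by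
    simpa using norm_integral_le_of_norm_le_const (μ := (volume : Measure UnitAddCircle))
      (Eventually.of_forall ψ.norm_coe_le_norm)
  have hspan : ∀ p ∈ Submodule.span ℂ (Set.range (@fourier 1)),
      Tendsto (fun N : ℕ => (∑ n ∈ Finset.range N, p (x n : UnitAddCircle)) / (N : ℂ)) atTop
      (𝓝 (∫ t, p t)) := by
    intro p hp
    induction hp using Submodule.span_induction with
    | mem p hp =>
      obtain ⟨h, rfl⟩ := hp
      rcases eq_or_ne h 0 with rfl | hh
      · simp only [fourier_zero, integral_const, probReal_univ, one_smul, Finset.sum_const,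
          Finset.card_range, nsmul_eq_mul, mul_one]
        refine tendsto_const_nhds.congr' ?_
        filter_upwards [eventually_gt_atTop 0] with N hN
        rw [div_self (by exact_mod_cast hN.ne')]
      · have h0 : ∫ t : UnitAddCircle, fourier h t = 0 :=
          integral_eq_zero_of_add_right_eq_neg (μ := (volume : Measure UnitAddCircle))
            (fourier_add_half_inv_index hh one_pos)
        rw [h0]
        refine (hx h hh).congr fun N => ?_
        congr 1
        refine Finset.sum_congr rfl fun n _ => ?_
        rw [fourier_coe_apply]
        simp only [expCircle]
        congr 1
        push_cast
        ring
    | zero => simp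
    | add p q _ _ hp hq =>
      simp only [ContinuousMap.add_apply]
      rw [integral_add (hInt p) (hInt q)]
      refine (hp.add hq).congr fun N => ?_
      rw [← add_div, ← Finset.sum_add_distrib]
    | smul c p _ hp =>
      simp only [ContinuousMap.smul_apply, smul_eq_mul]
      rw [integral_const_mul]
      refine (hp.const_mul c).congr fun N => ?_
      rw [← mul_div_assoc, Finset.mul_sum]
  rw [Metric.tendsto_nhds]
  intro ε hε
  have hφ : φ ∈ closure (Submodule.span ℂ (Set.range (@fourier 1)) : Set C(UnitAddCircle, ℂ)) := by
    rw [← Submodule.topologicalClosure_coe, span_fourier_closure_eq_top]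
    trivial
  obtain ⟨p, hp, hpφ⟩ := Metric.mem_closure_iff.1 hφ (ε / 3) (by positivity)
  rw [dist_eq_norm] at hpφ
  filter_upwards [Metric.tendsto_nhds.1 (hspan p hp) (ε / 3) (by positivity)] with N hN
  rw [dist_eq_norm] at hN ⊢
  have h1 := hmean (φ - p) N
  have h2 := hIntLe (φ - p)
  simp only [ContinuousMap.sub_apply] at h1 h2
  rw [Finset.sum_sub_distrib, sub_div] at h1
  rw [integral_sub (hInt φ) (hInt p)] at h2
  set A := (∑ n ∈ Finset.range N, φ (x n : UnitAddCircle)) / (N : ℂ)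
  set B := (∑ n ∈ Finset.range N, p (x n : UnitAddCircle)) / (N : ℂ)
  have h3 : A - ∫ t, φ t = (A - B) + (B - ∫ t, p t) - ((∫ t, φ t) - ∫ t, p t) := by ring
  rw [h3]
  have h4 := norm_sub_le ((A - B) + (B - ∫ t, p t)) ((∫ t, φ t) - ∫ t, p t)
  have h5 := norm_add_le (A - B) (B - ∫ t, p t)
  linarith

/-- The half-open arc of `ℝ/ℤ` from `a` to `b`. -/
def arc (a b : ℝ) : Set UnitAddCircle := (fun t : ℝ => (t : UnitAddCircle)) '' Set.Ico a b

lemma coe_mem_arc_iff {a b : ℝ} (ha : 0 ≤ a) (hb : b ≤ 1) (y : ℝ) :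
    (y : UnitAddCircle) ∈ arc a b ↔ Int.fract y ∈ Set.Ico a b := by
  have hy : (y : UnitAddCircle) = (Int.fract y : ℝ) := by
    rw [← sub_eq_zero, ← AddCircle.coe_sub, Int.self_sub_fract, AddCircle.coe_eq_zero_iff]
    exact ⟨⌊y⌋, by simp⟩
  constructor
  · rintro ⟨t, ht, hty⟩
    simp only at hty
    rw [hy, AddCircle.coe_eq_coe_iff_of_mem_Ico (a := 0)] at hty
    · rwa [← hty]
    · exact ⟨ha.trans ht.1, by linarith [ht.2]⟩
    · exact ⟨Int.fract_nonneg y, by simpa using Int.fract_lt_one y⟩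
  · intro h
    exact ⟨_, h, hy.symm⟩

lemma isOpen_image_Ioo (a b : ℝ) :
    IsOpen ((fun t : ℝ => (t : UnitAddCircle)) '' Set.Ioo a b) :=
  QuotientAddGroup.isOpenMap_coe _ isOpen_Ioo

lemma measurableSet_arc {a b : ℝ} (hab : a < b) : MeasurableSet (arc a b) := by
  rw [arc, ← Set.Ioo_insert_left hab, Set.image_insert_eq]
  exact (isOpen_image_Ioo a b).measurableSet.insert _

open MeasureTheory in
lemma volume_frontier_arc (a b : ℝ) : volume (frontier (arc a b)) = 0 := by
  have hcont : Continuous (fun t : ℝ => (t : UnitAddCircle)) := continuous_quotient_mk'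
  have hsub : frontier (arc a b) ⊆ {(a : UnitAddCircle), (b : UnitAddCircle)} := by
    intro t ht
    have h1 : t ∈ (fun t : ℝ => (t : UnitAddCircle)) '' Set.Icc a b :=
      closure_minimal (Set.image_mono Set.Ico_subset_Icc_self)
        (isCompact_Icc.image hcont).isClosed ht.1
    obtain ⟨s, hs, rfl⟩ := h1
    by_contra hne
    simp only [Set.mem_insert_iff, Set.mem_singleton_iff, not_or] at hne
    refine ht.2 (interior_maximal (Set.image_mono Set.Ioo_subset_Ico_self)
      (isOpen_image_Ioo a b) ⟨s, ⟨lt_of_le_of_ne hs.1 ?_, lt_of_le_of_ne hs.2 ?_⟩, rfl⟩)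
    · rintro rfl; exact hne.1 rfl
    · rintro rfl; exact hne.2 rfl
  have hpt : ∀ t : UnitAddCircle, volume {t} = 0 := fun t => by
    rw [← Metric.closedBall_zero, AddCircle.volume_closedBall]
    simp
  refine measure_mono_null hsub ?_
  rw [Set.insert_eq]
  exact measure_union_null (hpt _) (hpt _)

open MeasureTheory in
lemma volume_arc {a b : ℝ} (ha : 0 ≤ a) (hab : a < b) (hb : b ≤ 1) :
    volume (arc a b) = ENNReal.ofReal (b - a) := by
  have hm := (UnitAddCircle.measurePreserving_mk 0).measure_preimage
    (measurableSet_arc hab).nullMeasurableSet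
  rw [← hm, zero_add, ← restrict_Ico_eq_restrict_Ioc, Measure.restrict_apply' measurableSet_Ico]
  have : (fun t : ℝ => (t : UnitAddCircle)) ⁻¹' arc a b ∩ Set.Ico 0 1 = Set.Ico a b := by
    ext t
    simp only [Set.mem_inter_iff, Set.mem_preimage, coe_mem_arc_iff ha hb]
    constructor
    · rintro ⟨h1, h2⟩
      rwa [Int.fract_eq_self.2 h2] at h1
    · intro h
      have h2 : t ∈ Set.Ico (0 : ℝ) 1 := ⟨ha.trans h.1, h.2.trans_le hb⟩
      exact ⟨by rwa [Int.fract_eq_self.2 h2], h2⟩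
  rw [this, Real.volume_Ico]

open MeasureTheory in
/-- The average of the Dirac measures at the points `x 0, …, x N` of the circle. The
`N + 1` points make it a probability measure for every `N`. -/
noncomputable def empiricalMeasure (x : ℕ → ℝ) (N : ℕ) : ProbabilityMeasure UnitAddCircle :=
  ⟨((N + 1 : ℕ) : ENNReal)⁻¹ •
    ∑ n ∈ Finset.range (N + 1), Measure.dirac (x n : UnitAddCircle), ⟨by
      simp only [Measure.smul_apply, Measure.coe_finsetSum, Finset.sum_apply, measure_univ,
        Finset.sum_const, Finset.card_range, nsmul_eq_mul, mul_one, smul_eq_mul]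
      exact ENNReal.inv_mul_cancel (by simp) (ENNReal.natCast_ne_top _)⟩⟩

open MeasureTheory in
/-- Weyl's criterion. The shift by one is there because `UnifDistMod1` counts from `n = 1`. -/
lemma unifDistMod1_of_meanZero {x : ℕ → ℝ}
    (hx : ∀ h : ℤ, h ≠ 0 → MeanZero (fun n => expCircle (h * x (n + 1)))) : UnifDistMod1 x := by
  intro a b ha hab hb
  set y : ℕ → ℝ := fun n => x (n + 1) with hy
  have : IsProbabilityMeasure (volume : Measure UnitAddCircle) := ⟨UnitAddCircle.measure_univ⟩
  set ν : ProbabilityMeasure UnitAddCircle := ⟨volume, this⟩ with hν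
  have hweak : Tendsto (empiricalMeasure y) atTop (𝓝 ν) := by
    rw [ProbabilityMeasure.tendsto_iff_forall_integral_rclike_tendsto ℂ]
    intro φ
    have h1 := (tendsto_add_atTop_iff_nat 1).2 (tendsto_mean_continuousMap hx φ.toContinuousMap)
    refine h1.congr fun N => ?_
    simp only [empiricalMeasure, ProbabilityMeasure.coe_mk]
    rw [integral_smul_measure, integral_finsetSum_measure fun n _ => integrable_dirac (by simp)]
    rw [ENNReal.toReal_inv, ENNReal.toReal_natCast]
    simp [div_eq_inv_mul, y]
  have h2 : Tendsto (fun N => (empiricalMeasure y N : Measure UnitAddCircle) (arc a b)) atTop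
      (𝓝 (ENNReal.ofReal (b - a))) := by
    rw [← volume_arc ha hab hb]
    exact ProbabilityMeasure.tendsto_measure_of_null_frontier_of_tendsto' hweak
      (volume_frontier_arc a b)
  have h3 := (ENNReal.tendsto_toReal ENNReal.ofReal_ne_top).comp h2
  rw [ENNReal.toReal_ofReal (sub_nonneg.2 hab.le)] at h3
  refine (tendsto_add_atTop_iff_nat 1).1 (h3.congr fun N => ?_)
  classical
  have hcard : (((Finset.Icc 1 (N + 1)).filter (fun n => Int.fract (x n) ∈ Set.Ico a b)).card : ℝ)
      = ∑ n ∈ Finset.range (N + 1), if Int.fract (y n) ∈ Set.Ico a b then 1 else 0 := by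
    rw [Finset.card_filter, Finset.range_eq_Ico, Nat.cast_sum,
      Finset.sum_Ico_add' (fun n => if Int.fract (x n) ∈ Set.Ico a b then (1 : ℝ) else 0)]
    refine Finset.sum_congr ?_ fun n _ => by push_cast; rfl
    ext n; simp
  simp only [Function.comp, empiricalMeasure, ProbabilityMeasure.coe_mk, Measure.smul_apply,
    Measure.coe_finsetSum, Finset.sum_apply, smul_eq_mul,
    Measure.dirac_apply' _ (measurableSet_arc hab)]
  rw [ENNReal.toReal_mul, ENNReal.toReal_inv, ENNReal.toReal_natCast, ENNReal.toReal_sum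
    (fun n _ => by by_cases h : (y n : UnitAddCircle) ∈ arc a b <;> simp [h])]
  rw [div_eq_inv_mul]
  convert congrArg (fun z => ((N + 1 : ℕ) : ℝ)⁻¹ * z) hcard.symm using 2
  refine Finset.sum_congr rfl fun n _ => ?_
  simp only [Set.indicator_apply, coe_mem_arc_iff ha hb, Pi.one_apply]
  split_ifs <;> simp

/-- Van der Corput / Fejér-type criterion (Theorem 3.5 of Kuipers–Niederreiter):
if `f` is `k`-times differentiable for `x ≥ x₀`, `f⁽ᵏ⁾` is eventually monotonic,
`f⁽ᵏ⁾(x) → 0`, and `x·|f⁽ᵏ⁾(x)| → ∞`, then `(f(n))` is uniformly distributed mod 1. -/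
theorem unifDistMod1_of_iteratedDeriv (k : ℕ) (hk : 1 ≤ k) (f : ℝ → ℝ)
    (x₀ : ℝ) (hx₀ : 0 < x₀)
    (hdiff : ∀ i < k, ∀ x ≥ x₀, DifferentiableAt ℝ (iteratedDeriv i f) x)
    (x₁ : ℝ)
    (hmono : MonotoneOn (iteratedDeriv k f) (Set.Ici x₁) ∨
      AntitoneOn (iteratedDeriv k f) (Set.Ici x₁))
    (hlim : Tendsto (iteratedDeriv k f) atTop (𝓝 0))
    (hinf : Tendsto (fun x => x * |iteratedDeriv k f x|) atTop atTop) :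
    UnifDistMod1 (fun n => f n) := by
  obtain ⟨k, rfl⟩ := Nat.exists_eq_add_of_le' hk
  have hclass : FejerClass (k + 1) f ∨ FejerClass (k + 1) (fun x => -f x) := by
    have hder : ∀ i < k + 1, ∀ x ≥ max x₀ x₁,
        HasDerivAt (iteratedDeriv i f) (iteratedDeriv (i + 1) f x) x := by
      intro i hi x hx
      rw [iteratedDeriv_succ]
      exact (hdiff i hi x ((le_max_left _ _).trans hx)).hasDerivAt
    have hsub : Set.Ici (max x₀ x₁) ⊆ Set.Ici x₁ := Set.Ici_subset_Ici.2 (le_max_right _ _)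
    rcases hmono with hm | hm
    · right
      have hanti : AntitoneOn (fun x => -iteratedDeriv (k + 1) f x) (Set.Ici (max x₀ x₁)) :=
        (hm.mono hsub).neg
      have hlim' : Tendsto (fun x => -iteratedDeriv (k + 1) f x) atTop (𝓝 0) := by
        simpa using hlim.neg
      refine ⟨max x₀ x₁, fun i x => -iteratedDeriv i f x, by simp, fun i hi x hx =>
        (hder i hi x hx).neg, hanti, hlim', hinf.congr' ?_⟩
      filter_upwards [eventually_ge_atTop (max x₀ x₁)] with x hx
      rw [← abs_neg, abs_of_nonneg (hanti.nonneg_of_tendsto_zero hlim' hx)]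
    · left
      have hanti := hm.mono hsub
      refine ⟨max x₀ x₁, fun i => iteratedDeriv i f, by simp, hder, hanti, hlim, hinf.congr' ?_⟩
      filter_upwards [eventually_ge_atTop (max x₀ x₁)] with x hx
      rw [abs_of_nonneg (hanti.nonneg_of_tendsto_zero hlim hx)]
  -- The sign of `f` is immaterial, since changing it conjugates the means.
  have habs : ∀ c : ℝ, 0 < c → MeanZero (fun n : ℕ => expCircle (c * f n)) := by
    intro c hc
    rcases hclass with h | h
    · exact (h.const_mul hc).meanZero
    · simpa [conj_expCircle] using meanZero_conj (h.const_mul hc).meanZero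
  refine unifDistMod1_of_meanZero fun h hh => ?_
  refine (meanZero_succ_iff (u := fun n : ℕ => expCircle (h * f n))
    fun n => (norm_expCircle _).le).2 ?_
  rcases lt_or_gt_of_ne hh with hneg | hpos
  · have h1 : (0 : ℝ) < -h := by exact_mod_cast neg_pos.2 hneg
    simpa [conj_expCircle] using meanZero_conj (habs _ h1)
  · exact habs _ (by exact_mod_cast hpos)
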